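/- Let d ≥ 2 and n be positive integers, let (x_i)_{i=1}^n be independent random vectors each drawn from the uniform probability measure on the closed Euclidean ball of radius sqrt((d+2)/n) in ℝ^d, and let S = Σ_{i=1}^n x_i x_i^* be the associated frame operator. Then for every ε ≥ 0, the probability that ‖S − I_d‖_op ≥ ε is at most 2d · exp( − n ε² / (2d + 2 + 2ε(d+1)/3) ). -/

import Mathlib

/-!
This is the Ahlswede–Winter method. The Golden–Thompson inequality peels the random vectors one at
a time off `𝔼 tr exp (t • (S - 1))`. Since `x xᵀ` has rank one, `exp (s • x xᵀ)` is the identity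
plus a multiple of `x xᵀ`, so an isotropic vector, that is one whose second moment operator is a
multiple of the identity, contributes a *scalar* factor. When `‖x‖ ^ 2 ≤ (a + 1) / n`, this factor
is the moment generating function of a centered variable with values `-1` and `a`, to which
Bernstein's bound applies. Finally `exp (t * ‖T‖) ≤ tr exp (t • T) + tr exp (-t • T)` and Markov's
inequality, at the optimal Bernstein parameter, bound the tail of `‖S - 1‖`. For the ball of radius
`√((d + 2) / n)` one has `a = d + 1`, and rotation invariance reduces isotropy to the radial moment.
-/

open MeasureTheory ProbabilityTheory Real

noncomputable section

/-- The frame operator `S v = ∑ i, ⟪x i, v⟫ • x i` of a finite family of vectors in `ℝ^d`,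
as a continuous linear map on Euclidean space. -/
def frameOperator {d n : ℕ} (x : Fin n → EuclideanSpace ℝ (Fin d)) :
    EuclideanSpace ℝ (Fin d) →L[ℝ] EuclideanSpace ℝ (Fin d) :=
  ∑ i, (innerSL ℝ (x i)).smulRight (x i)

open Filter Topology
open NormedSpace (exp)

section LieTrotter

variable {𝔸 : Type*} [NormedRing 𝔸]

theorem hasDerivAt_exp_smul_zero [NormedAlgebra ℝ 𝔸] [CompleteSpace 𝔸] (a : 𝔸) :
    HasDerivAt (fun t : ℝ => exp (t • a)) a 0 := by
  simpa using hasDerivAt_exp_smul_const (𝕂 := ℝ) a (0 : ℝ)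

theorem exp_inv_natCast_smul_pow [NormedAlgebra ℝ 𝔸] [CompleteSpace 𝔸] (a : 𝔸) {n : ℕ}
    (hn : n ≠ 0) : exp ((n : ℝ)⁻¹ • a) ^ n = exp a := by
  let _ : NormedAlgebra ℚ 𝔸 := NormedAlgebra.restrictScalars ℚ ℝ 𝔸
  rw [← NormedSpace.exp_nsmul, ← Nat.cast_smul_eq_nsmul ℝ, smul_inv_smul₀ (Nat.cast_ne_zero.2 hn)]

variable [NormOneClass 𝔸]

theorem norm_pow_sub_pow_le {x y : 𝔸} {r : ℝ} (hr : 1 ≤ r) (hx : ‖x‖ ≤ r) (hy : ‖y‖ ≤ r)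
    (n : ℕ) : ‖x ^ n - y ^ n‖ ≤ n * r ^ n * ‖x - y‖ := by
  induction n with
  | zero => simp
  | succ n ih =>
    have hsplit : x ^ (n + 1) - y ^ (n + 1) = x * (x ^ n - y ^ n) + (x - y) * y ^ n := by
      rw [pow_succ', pow_succ']; noncomm_ring
    have hpow : ‖y ^ n‖ ≤ r ^ (n + 1) :=
      (norm_pow_le y n).trans ((pow_le_pow_left₀ (norm_nonneg y) hy n).trans
        (pow_le_pow_right₀ hr n.le_succ))
    calc ‖x ^ (n + 1) - y ^ (n + 1)‖ ≤ ‖x‖ * ‖x ^ n - y ^ n‖ + ‖x - y‖ * ‖y ^ n‖ := by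
          rw [hsplit]
          exact (norm_add_le _ _).trans (add_le_add (norm_mul_le _ _) (norm_mul_le _ _))
      _ ≤ r * (n * r ^ n * ‖x - y‖) + ‖x - y‖ * r ^ (n + 1) := by gcongr
      _ = (n + 1 : ℕ) * r ^ (n + 1) * ‖x - y‖ := by push_cast; ring

variable [NormedAlgebra ℝ 𝔸]

theorem exists_eventually_norm_le_exp_of_hasDerivAt {f : ℝ → 𝔸} {a : 𝔸} (hf : HasDerivAt f a 0)
    (h0 : f 0 = 1) : ∃ L, 0 ≤ L ∧ ∀ᶠ t in 𝓝 (0 : ℝ), ‖f t‖ ≤ Real.exp (L * |t|) := by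
  obtain ⟨L, hL, hfL⟩ := hf.isBigO_sub.exists_nonneg
  refine ⟨L, hL, hfL.bound.mono fun t ht => ?_⟩
  rw [h0, sub_zero, Real.norm_eq_abs] at ht
  calc ‖f t‖ ≤ ‖f t - 1‖ + ‖(1 : 𝔸)‖ := norm_le_norm_sub_add _ _
    _ ≤ L * |t| + 1 := by rw [norm_one]; gcongr
    _ ≤ Real.exp (L * |t|) := Real.add_one_le_exp _

theorem tendsto_pow_sub_pow_of_hasDerivAt {f g : ℝ → 𝔸} {a : 𝔸} (hf : HasDerivAt f a 0)
    (hg : HasDerivAt g a 0) (hf0 : f 0 = 1) (hg0 : g 0 = 1) :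
    Tendsto (fun n : ℕ => f (n : ℝ)⁻¹ ^ n - g (n : ℝ)⁻¹ ^ n) atTop (𝓝 0) := by
  obtain ⟨L, hL, hfL⟩ := exists_eventually_norm_le_exp_of_hasDerivAt hf hf0
  obtain ⟨L', hL', hgL'⟩ := exists_eventually_norm_le_exp_of_hasDerivAt hg hg0
  have hslope : Tendsto (fun t => t⁻¹ • (f t - g t)) (𝓝[≠] 0) (𝓝 0) := by
    simpa [hf0, hg0] using hasDerivAt_iff_tendsto_slope_zero.1 (hf.sub hg)
  have hinv : Tendsto (fun n : ℕ => (n : ℝ)⁻¹) atTop (𝓝[≠] 0) :=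
    tendsto_nhdsWithin_iff.2 ⟨tendsto_inv_atTop_nhds_zero_nat,
      (eventually_ne_atTop 0).mono fun n hn => inv_ne_zero (Nat.cast_ne_zero.2 hn)⟩
  have hnhds := hinv.mono_right nhdsWithin_le_nhds
  refine squeeze_zero_norm' ?_
    (by simpa only [norm_zero, mul_zero] using
      (hslope.comp hinv).norm.const_mul (Real.exp (L + L')))
  filter_upwards [hnhds.eventually hfL, hnhds.eventually hgL', eventually_ne_atTop 0]
    with n hfn hgn hn
  set t : ℝ := (n : ℝ)⁻¹
  have hexp {l : ℝ} (hl : l ≤ L + L') : Real.exp (l * |t|) ≤ Real.exp ((L + L') * |t|) := by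
    gcongr
  have hnt : n * |t| = 1 := by
    rw [abs_of_nonneg (by positivity), mul_inv_cancel₀ (Nat.cast_ne_zero.2 hn)]
  calc ‖f t ^ n - g t ^ n‖ ≤ n * Real.exp ((L + L') * |t|) ^ n * ‖f t - g t‖ :=
        norm_pow_sub_pow_le (Real.one_le_exp (by positivity)) (hfn.trans (hexp (by linarith)))
          (hgn.trans (hexp (by linarith))) n
    _ = Real.exp (L + L') * ‖t⁻¹ • (f t - g t)‖ := by
        rw [← Real.exp_nat_mul, mul_left_comm, hnt, norm_smul, inv_inv, Real.norm_natCast, mul_one]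
        ring

variable [CompleteSpace 𝔸]

theorem tendsto_pow_exp_of_hasDerivAt {f : ℝ → 𝔸} {a : 𝔸} (hf : HasDerivAt f a 0)
    (hf0 : f 0 = 1) : Tendsto (fun n : ℕ => f (n : ℝ)⁻¹ ^ n) atTop (𝓝 (exp a)) := by
  have hpow : ∀ᶠ n : ℕ in atTop, exp ((n : ℝ)⁻¹ • a) ^ n = exp a :=
    (eventually_ne_atTop 0).mono fun n hn => exp_inv_natCast_smul_pow a hn
  have hdiff := tendsto_pow_sub_pow_of_hasDerivAt hf (hasDerivAt_exp_smul_zero a) hf0 (by simp)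
  simpa using hdiff.add (tendsto_const_nhds.congr' (hpow.mono fun _ hn => hn.symm))

theorem tendsto_exp_smul_mul_exp_smul_pow (a b : 𝔸) :
    Tendsto (fun n : ℕ => (exp ((n : ℝ)⁻¹ • a) * exp ((n : ℝ)⁻¹ • b)) ^ n) atTop
      (𝓝 (exp (a + b))) := by
  refine tendsto_pow_exp_of_hasDerivAt (f := fun t : ℝ => exp (t • a) * exp (t • b)) ?_ (by simp)
  simpa [Pi.mul_def] using (hasDerivAt_exp_smul_zero a).mul (hasDerivAt_exp_smul_zero b)

end LieTrotter

section GoldenThompson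

/-- A positive tracial functional on a star ring that is real linear: the structure of the trace
of matrices which the Golden–Thompson inequality relies on. -/
structure IsPositiveTrace {A : Type*} [Ring A] [StarRing A] [Module ℝ A] (τ : A →ₗ[ℝ] ℝ) :
    Prop where
  map_mul_comm (x y : A) : τ (x * y) = τ (y * x)
  map_star (x : A) : τ (star x) = τ x
  map_mul_star_self_nonneg (x : A) : 0 ≤ τ (x * star x)

namespace IsPositiveTrace

section Ring

variable {A : Type*} [Ring A] [StarRing A] [Module ℝ A] {τ : A →ₗ[ℝ] ℝ}

theorem map_mul_pow_comm (hτ : IsPositiveTrace τ) (x y : A) (n : ℕ) :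
    τ ((x * y) ^ n) = τ ((y * x) ^ n) := by
  cases n with
  | zero => simp
  | succ n =>
    rw [pow_succ, ← mul_assoc, mul_pow_mul, hτ.map_mul_comm, ← mul_assoc, ← pow_succ']

theorem two_mul_map_mul_le (hτ : IsPositiveTrace τ) (x y : A) :
    2 * τ (x * y) ≤ τ (x * star x) + τ (star y * y) := by
  have hexpand : (x - star y) * star (x - star y) =
      x * star x + star y * y - (x * y + star (x * y)) := by
    rw [star_sub, star_star, star_mul]; noncomm_ring
  have hnonneg := hτ.map_mul_star_self_nonneg (x - star y)
  rw [hexpand, map_sub, map_add, map_add, hτ.map_star] at hnonneg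
  linarith

theorem map_mul_mul_star_pow (hτ : IsPositiveTrace τ) {p q : A} (hp : IsSelfAdjoint p)
    (hq : IsSelfAdjoint q) (n : ℕ) :
    τ ((p * q * star (p * q)) ^ n) = τ ((p ^ 2 * q ^ 2) ^ n) := by
  rw [star_mul, hp.star_eq, hq.star_eq, ← mul_assoc, hτ.map_mul_pow_comm]
  simp only [pow_two, mul_assoc]

/-- The second inequality at level `k` is needed for the first one at level `k + 1`, and conversely,
hence the joint induction. -/
theorem map_pow_two_pow_le_and (hτ : IsPositiveTrace τ) (k : ℕ) :
    (∀ x : A, τ (x ^ 2 ^ (k + 1)) ≤ τ ((x * star x) ^ 2 ^ k)) ∧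
      ∀ p q : A, IsSelfAdjoint p → IsSelfAdjoint q →
        2 * τ ((p * q) ^ 2 ^ k) ≤ τ (p ^ 2 ^ (k + 1)) + τ (q ^ 2 ^ (k + 1)) := by
  induction k with
  | zero =>
    refine ⟨fun x => ?_, fun p q hp hq => ?_⟩
    · have h := hτ.two_mul_map_mul_le x x
      rw [hτ.map_mul_comm (star x)] at h
      simpa [pow_two] using (by linarith : τ (x * x) ≤ τ (x * star x))
    · simpa [pow_two, hp.star_eq, hq.star_eq] using hτ.two_mul_map_mul_le p q
  | succ k ih =>
    obtain ⟨ihsq, ihmul⟩ := ih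
    have hpow (x : A) : x ^ 2 ^ (k + 2) = (x ^ 2) ^ 2 ^ (k + 1) := by rw [← pow_mul, ← pow_succ']
    refine ⟨fun x => ?_, fun p q hp hq => ?_⟩
    · have hcycle : τ ((x ^ 2 * star (x ^ 2)) ^ 2 ^ k) =
          τ ((x * star x * (star x * x)) ^ 2 ^ k) := by
        rw [star_pow, pow_two, pow_two, mul_assoc x, hτ.map_mul_pow_comm]
        simp only [mul_assoc]
      have hswap := hτ.map_mul_pow_comm (star x) x (2 ^ (k + 1))
      have hmul := ihmul _ _ (IsSelfAdjoint.mul_star_self x) (IsSelfAdjoint.star_mul_self x)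
      have hsq := ihsq (x ^ 2)
      rw [hpow]
      linarith
    · have hsq := ihsq (p * q)
      rw [hτ.map_mul_mul_star_pow hp hq] at hsq
      have hmul := ihmul _ _ (hp.pow 2) (hq.pow 2)
      rw [hpow, hpow]
      linarith

theorem map_mul_pow_two_pow_le (hτ : IsPositiveTrace τ) {p q : A} (hp : IsSelfAdjoint p)
    (hq : IsSelfAdjoint q) (k : ℕ) : τ ((p * q) ^ 2 ^ k) ≤ τ (p ^ 2 ^ k * q ^ 2 ^ k) := by
  induction k generalizing p q with
  | zero => simp
  | succ k ih =>
    calc τ ((p * q) ^ 2 ^ (k + 1)) ≤ τ ((p * q * star (p * q)) ^ 2 ^ k) :=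
          (hτ.map_pow_two_pow_le_and k).1 _
      _ = τ ((p ^ 2 * q ^ 2) ^ 2 ^ k) := hτ.map_mul_mul_star_pow hp hq _
      _ ≤ τ ((p ^ 2) ^ 2 ^ k * (q ^ 2) ^ 2 ^ k) := ih (hp.pow 2) (hq.pow 2)
      _ = τ (p ^ 2 ^ (k + 1) * q ^ 2 ^ (k + 1)) := by simp only [← pow_mul, ← pow_succ']

end Ring

theorem map_exp_add_le {𝔸 : Type*} [NormedRing 𝔸] [NormOneClass 𝔸] [NormedAlgebra ℝ 𝔸]
    [CompleteSpace 𝔸] [StarRing 𝔸] [ContinuousStar 𝔸] [StarModule ℝ 𝔸] {τ : 𝔸 →ₗ[ℝ] ℝ}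
    (hτ : IsPositiveTrace τ) (hcont : Continuous τ) {a b : 𝔸} (ha : IsSelfAdjoint a)
    (hb : IsSelfAdjoint b) : τ (exp (a + b)) ≤ τ (exp a * exp b) := by
  have htwo : Tendsto (fun k : ℕ => 2 ^ k) atTop atTop :=
    tendsto_pow_atTop_atTop_of_one_lt one_lt_two
  have hlim := (hcont.tendsto _).comp ((tendsto_exp_smul_mul_exp_smul_pow a b).comp htwo)
  have hroot (c : 𝔸) (k : ℕ) : exp (((2 ^ k : ℕ) : ℝ)⁻¹ • c) ^ 2 ^ k = exp c :=
    exp_inv_natCast_smul_pow c (by positivity)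
  refine le_of_tendsto' hlim fun k => ?_
  let _ : NormedAlgebra ℚ 𝔸 := NormedAlgebra.restrictScalars ℚ ℝ 𝔸
  have hsa {c : 𝔸} (hc : IsSelfAdjoint c) : IsSelfAdjoint (exp (((2 ^ k : ℕ) : ℝ)⁻¹ • c)) :=
    (IsSelfAdjoint.smul (.all _) hc).exp
  simpa only [Function.comp_apply, hroot] using hτ.map_mul_pow_two_pow_le (hsa ha) (hsa hb) k

end IsPositiveTrace

end GoldenThompson

section Operator

open InnerProductSpace ContinuousLinearMap
open scoped InnerProductSpace

theorem exp_smul_of_isIdempotentElem {𝔸 : Type*} [NormedRing 𝔸] [NormedAlgebra ℝ 𝔸]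
    [CompleteSpace 𝔸] {p : 𝔸} (hp : IsIdempotentElem p) (t : ℝ) :
    exp (t • p) = 1 + (Real.exp t - 1) • p := by
  have hscalar : HasSum (fun n : ℕ => ((n.factorial : ℝ)⁻¹ * t ^ n) • p) (Real.exp t • p) := by
    rw [Real.exp_eq_exp_ℝ]
    simpa only [smul_eq_mul] using (NormedSpace.exp_series_hasSum_exp' (𝕂 := ℝ) t).smul_const p
  have hzero : HasSum (fun n : ℕ => if n = 0 then 1 - p else 0) (1 - p) := hasSum_ite_eq 0 _
  have hterm (n : ℕ) : ((n.factorial : ℝ)⁻¹ • (t • p) ^ n) =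
      ((n.factorial : ℝ)⁻¹ * t ^ n) • p + if n = 0 then 1 - p else 0 := by
    cases n with
    | zero => simp
    | succ n => simp [smul_pow, smul_smul, hp.pow_succ_eq]
  have hexp := NormedSpace.exp_series_hasSum_exp' (𝕂 := ℝ) (t • p)
  simp only [hterm] at hexp
  rw [hexp.unique (hscalar.add hzero), sub_smul, one_smul]
  abel

variable {E : Type*} [NormedAddCommGroup E] [InnerProductSpace ℝ E]

theorem continuous_rankOne_self : Continuous fun x : E => rankOne ℝ x x :=
  (rankOne ℝ).continuous.clm_apply continuous_id

section Exp

variable [CompleteSpace E]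

theorem exp_smul_rankOne_self (t : ℝ) {x : E} (hx : x ≠ 0) :
    exp (t • rankOne ℝ x x) =
      1 + ((Real.exp (t * ‖x‖ ^ 2) - 1) / ‖x‖ ^ 2) • rankOne ℝ x x := by
  have hnorm : ‖x‖ ≠ 0 := norm_ne_zero_iff.2 hx
  set u : E := ‖x‖⁻¹ • x with hu
  have hidem : IsIdempotentElem (rankOne ℝ u u) :=
    isIdempotentElem_rankOne_self (norm_smul_inv_norm hx)
  have hxu : rankOne ℝ x x = ‖x‖ ^ 2 • rankOne ℝ u u := by
    have hscale : ‖x‖ ^ 2 * (‖x‖⁻¹ * ‖x‖⁻¹) = 1 := by field_simp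
    simp [hu, smul_smul, hscale]
  rw [hxu, smul_smul, exp_smul_of_isIdempotentElem hidem, smul_smul,
    div_mul_cancel₀ _ (pow_ne_zero 2 hnorm)]

theorem inner_exp_apply_self_nonneg {A : E →L[ℝ] E} (hA : IsSelfAdjoint A) (x : E) :
    0 ≤ ⟪x, exp A x⟫_ℝ := by
  let _ : NormedAlgebra ℚ (E →L[ℝ] E) := NormedAlgebra.restrictScalars ℚ ℝ _
  have hsqrt : IsSelfAdjoint (exp (((2 : ℕ) : ℝ)⁻¹ • A)) := (IsSelfAdjoint.smul (.all _) hA).exp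
  rw [← exp_inv_natCast_smul_pow A two_ne_zero, pow_two, mul_def, comp_apply,
    ← adjoint_inner_left, hsqrt.adjoint_eq]
  exact real_inner_self_nonneg

theorem inner_apply_self_eq_sum {ι : Type*} [Fintype ι] (b : OrthonormalBasis ι ℝ E)
    (T : E →L[ℝ] E) (x : E) :
    ⟪x, T x⟫_ℝ = ∑ i, ⟪b i, x⟫_ℝ * ⟪adjoint T (b i), x⟫_ℝ := by
  simp only [← b.sum_inner_mul_inner x (T x), adjoint_inner_left, real_inner_comm]

theorem isSelfAdjoint_smul_rankOne_self (t : ℝ) (x : E) : IsSelfAdjoint (t • rankOne ℝ x x) :=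
  IsSelfAdjoint.smul (.all _) (isSelfAdjoint_iff'.2 (adjoint_rankOne x x))

theorem exp_apply_eq_smul {T : E →L[ℝ] E} {c : ℝ} {v : E} (hv : T v = c • v) :
    exp T v = Real.exp c • v := by
  have hpow (n : ℕ) : (T ^ n) v = c ^ n • v := by
    induction n with
    | zero => simp
    | succ n ih => rw [pow_succ, mul_def, comp_apply, hv, map_smul, ih, smul_smul, pow_succ']
  have hT := (NormedSpace.exp_series_hasSum_exp' (𝕂 := ℝ) T).mapL (ContinuousLinearMap.apply ℝ E v)
  have hc := (NormedSpace.exp_series_hasSum_exp' (𝕂 := ℝ) c).smul_const v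
  rw [Real.exp_eq_exp_ℝ]
  exact hT.unique (by simpa [hpow, smul_smul] using hc)

end Exp

section Trace

/-- The trace of an operator on a finite-dimensional real inner product space, as a linear
functional on the algebra of continuous operators. -/
def operatorTrace : (E →L[ℝ] E) →ₗ[ℝ] ℝ :=
  LinearMap.trace ℝ E ∘ₗ ContinuousLinearMap.coeLM ℝ

theorem operatorTrace_eq_sum_inner {ι : Type*} [Fintype ι] (T : E →L[ℝ] E)
    (b : OrthonormalBasis ι ℝ E) : operatorTrace T = ∑ i, ⟪b i, T (b i)⟫_ℝ :=
  LinearMap.trace_eq_sum_inner (T : E →ₗ[ℝ] E) b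

variable [FiniteDimensional ℝ E]

theorem operatorTrace_one : operatorTrace (1 : E →L[ℝ] E) = Module.finrank ℝ E :=
  LinearMap.trace_one ℝ E

theorem operatorTrace_mul_rankOne (T : E →L[ℝ] E) (x y : E) :
    operatorTrace (T * rankOne ℝ x y) = ⟪y, T x⟫_ℝ := by
  rw [ContinuousLinearMap.mul_def, comp_rankOne]
  exact trace_rankOne _ _

theorem continuous_operatorTrace : Continuous (operatorTrace : (E →L[ℝ] E) →ₗ[ℝ] ℝ) :=
  LinearMap.continuous_of_finiteDimensional (operatorTrace : (E →L[ℝ] E) →ₗ[ℝ] ℝ)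

theorem exists_norm_le_abs_eigenvalue [Nontrivial E] {T : E →L[ℝ] E}
    (hT : (T : E →ₗ[ℝ] E).IsSymmetric) : ∃ i, ‖T‖ ≤ |hT.eigenvalues rfl i| := by
  have : Nonempty (Fin (Module.finrank ℝ E)) := ⟨⟨0, Module.finrank_pos⟩⟩
  obtain ⟨i, hi⟩ := Finite.exists_max fun i => |hT.eigenvalues rfl i|
  refine ⟨i, T.opNorm_le_bound (abs_nonneg _) fun v => ?_⟩
  let b := hT.eigenvectorBasis rfl
  have hcoord (j) : ⟪b j, T v⟫_ℝ = hT.eigenvalues rfl j * ⟪b j, v⟫_ℝ := by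
    have hsymm : ⟪b j, T v⟫_ℝ = ⟪T (b j), v⟫_ℝ := (hT (b j) v).symm
    have heigen : T (b j) = hT.eigenvalues rfl j • b j := hT.apply_eigenvectorBasis rfl j
    rw [hsymm, heigen, real_inner_smul_left]
  refine le_of_sq_le_sq ?_ (by positivity)
  rw [mul_pow, ← b.sum_sq_norm_inner_right, ← b.sum_sq_norm_inner_right v, Finset.mul_sum]
  refine Finset.sum_le_sum fun j _ => ?_
  rw [hcoord, norm_mul, mul_pow, Real.norm_eq_abs]
  exact mul_le_mul_of_nonneg_right (pow_le_pow_left₀ (abs_nonneg _) (hi j) 2) (sq_nonneg _)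

theorem continuous_operatorTrace_exp : Continuous fun T : E →L[ℝ] E => operatorTrace (exp T) := by
  have := FiniteDimensional.complete ℝ E
  let _ : NormedAlgebra ℚ (E →L[ℝ] E) := NormedAlgebra.restrictScalars ℚ ℝ _
  exact continuous_operatorTrace.comp NormedSpace.exp_continuous

theorem operatorTrace_exp_smul_one (t : ℝ) :
    operatorTrace (exp (t • (1 : E →L[ℝ] E))) = Module.finrank ℝ E * Real.exp t := by
  have := FiniteDimensional.complete ℝ E
  have hone : IsIdempotentElem (1 : E →L[ℝ] E) := .one
  rw [exp_smul_of_isIdempotentElem hone, map_add, map_smul, operatorTrace_one, smul_eq_mul]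
  ring

theorem operatorTrace_exp_smul_eq_sum {T : E →L[ℝ] E} (hT : (T : E →ₗ[ℝ] E).IsSymmetric) (t : ℝ) :
    operatorTrace (exp (t • T)) = ∑ i, Real.exp (t * hT.eigenvalues rfl i) := by
  have := FiniteDimensional.complete ℝ E
  rw [operatorTrace_eq_sum_inner _ (hT.eigenvectorBasis rfl)]
  refine Finset.sum_congr rfl fun i _ => ?_
  have heigen : (t • T) (hT.eigenvectorBasis rfl i) =
      (t * hT.eigenvalues rfl i) • hT.eigenvectorBasis rfl i := by
    rw [mul_smul]
    exact congrArg (t • ·) (hT.apply_eigenvectorBasis rfl i)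
  rw [exp_apply_eq_smul heigen, inner_smul_right, real_inner_self_eq_norm_sq,
    OrthonormalBasis.norm_eq_one, one_pow, mul_one]

variable [CompleteSpace E]

theorem isPositiveTrace_operatorTrace :
    IsPositiveTrace (operatorTrace : (E →L[ℝ] E) →ₗ[ℝ] ℝ) where
  map_mul_comm S T := LinearMap.trace_mul_comm ℝ (S : E →ₗ[ℝ] E) T
  map_star T := by
    simp only [operatorTrace_eq_sum_inner _ (stdOrthonormalBasis ℝ E), star_eq_adjoint,
      adjoint_inner_right, real_inner_comm]
  map_mul_star_self_nonneg T := by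
    rw [operatorTrace_eq_sum_inner _ (stdOrthonormalBasis ℝ E)]
    refine Finset.sum_nonneg fun i _ => ?_
    rw [star_eq_adjoint, mul_def, comp_apply, ← adjoint_inner_left]
    exact real_inner_self_nonneg

theorem operatorTrace_exp_nonneg {A : E →L[ℝ] E} (hA : IsSelfAdjoint A) :
    0 ≤ operatorTrace (exp A) := by
  rw [operatorTrace_eq_sum_inner _ (stdOrthonormalBasis ℝ E)]
  exact Finset.sum_nonneg fun i _ => inner_exp_apply_self_nonneg hA _

theorem exp_mul_norm_le_operatorTrace_exp_add [Nontrivial E] {T : E →L[ℝ] E}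
    (hT : IsSelfAdjoint T) (t : ℝ) :
    Real.exp (t * ‖T‖) ≤ operatorTrace (exp (t • T)) + operatorTrace (exp (-t • T)) := by
  have hsymm : (T : E →ₗ[ℝ] E).IsSymmetric := isSelfAdjoint_iff_isSymmetric.1 hT
  obtain ⟨i, hi⟩ := exists_norm_le_abs_eigenvalue hsymm
  set c := hsymm.eigenvalues rfl i
  have hle (s : ℝ) : Real.exp (s * c) ≤ operatorTrace (exp (s • T)) := by
    rw [operatorTrace_exp_smul_eq_sum hsymm]
    exact Finset.single_le_sum (f := fun j => Real.exp (s * hsymm.eigenvalues rfl j))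
      (fun j _ => (Real.exp_pos _).le) (Finset.mem_univ i)
  calc Real.exp (t * ‖T‖) ≤ Real.exp |t * c| := by
        rw [abs_mul]
        exact Real.exp_le_exp.2 (mul_le_mul (le_abs_self t) hi (norm_nonneg T) (abs_nonneg t))
    _ ≤ Real.exp (t * c) + Real.exp (-t * c) := by simpa using Real.exp_abs_le (t * c)
    _ ≤ _ := add_le_add (hle t) (hle (-t))

theorem operatorTrace_exp_add_smul_rankOne_le {A : E →L[ℝ] E}
    (hA : IsSelfAdjoint A) {x : E} {q : ℝ} (hq : 0 < q) (hx : ‖x‖ ^ 2 ≤ q) (t : ℝ) :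
    operatorTrace (exp (A + t • rankOne ℝ x x)) ≤
      operatorTrace (exp A) + (Real.exp (t * q) - 1) / q * ⟪x, exp A x⟫_ℝ := by
  rcases eq_or_ne x 0 with rfl | hx0
  · simp
  have : Nontrivial E := ⟨x, 0, hx0⟩
  have hpos : 0 < ‖x‖ ^ 2 := by positivity
  have hchord : (Real.exp (t * ‖x‖ ^ 2) - 1) / ‖x‖ ^ 2 ≤ (Real.exp (t * q) - 1) / q := by
    have hconv : ConvexOn ℝ Set.univ fun s : ℝ => Real.exp (t * s) :=
      convexOn_exp.comp_linearMap (LinearMap.mul ℝ ℝ t)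
    simpa using hconv.secant_mono (Set.mem_univ 0) (Set.mem_univ _) (Set.mem_univ _) hpos.ne'
      hq.ne' hx
  calc operatorTrace (exp (A + t • rankOne ℝ x x))
      ≤ operatorTrace (exp A * exp (t • rankOne ℝ x x)) :=
        isPositiveTrace_operatorTrace.map_exp_add_le continuous_operatorTrace hA
          (isSelfAdjoint_smul_rankOne_self t x)
    _ = operatorTrace (exp A) + (Real.exp (t * ‖x‖ ^ 2) - 1) / ‖x‖ ^ 2 * ⟪x, exp A x⟫_ℝ := by
        rw [exp_smul_rankOne_self t hx0, mul_add, mul_one, mul_smul_comm, map_add, map_smul,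
          operatorTrace_mul_rankOne, smul_eq_mul]
    _ ≤ _ := by
        gcongr
        exact inner_exp_apply_self_nonneg hA x

end Trace

end Operator

section Bernstein

theorem exp_le_one_add_self_add_bernstein {y : ℝ} (hy : |y| < 3) :
    Real.exp y ≤ 1 + y + y ^ 2 / 2 / (1 - |y| / 3) := by
  have hexp := NormedSpace.exp_series_hasSum_exp' (𝕂 := ℝ) y
  rw [← Real.exp_eq_exp_ℝ] at hexp
  have htail := (hasSum_nat_add_iff' 2).2 hexp
  have hgeom := (hasSum_geometric_of_lt_one (r := |y| / 3) (by positivity)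
    (by linarith)).mul_left (y ^ 2 / 2)
  have hterm (n : ℕ) : ((n + 2).factorial : ℝ)⁻¹ • y ^ (n + 2) ≤ y ^ 2 / 2 * (|y| / 3) ^ n := by
    have hfact : (2 * 3 ^ n : ℝ) ≤ (n + 2).factorial := by
      rw [add_comm]
      exact_mod_cast Nat.factorial_mul_pow_le_factorial (m := 2) (n := n)
    calc ((n + 2).factorial : ℝ)⁻¹ • y ^ (n + 2)
        ≤ ((n + 2).factorial : ℝ)⁻¹ * |y| ^ (n + 2) := by
          rw [smul_eq_mul, ← abs_pow]
          gcongr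
          exact le_abs_self _
      _ ≤ (2 * 3 ^ n)⁻¹ * |y| ^ (n + 2) := by gcongr
      _ = y ^ 2 / 2 * (|y| / 3) ^ n := by rw [pow_add, sq_abs, div_pow]; field_simp
  have hle := hasSum_le hterm htail hgeom
  simp only [smul_eq_mul, Finset.sum_range_succ, Finset.range_one, Finset.sum_singleton,
    Nat.factorial_zero, Nat.cast_one, inv_one, pow_zero, mul_one, Nat.factorial_one, pow_one,
    one_mul, tsub_le_iff_right] at hle
  rw [div_eq_mul_inv (y ^ 2 / 2)]
  linarith

/-- The left-hand side is the moment generating function of the centered two-point variable with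
values `-1` and `a`. -/
theorem two_point_mgf_le {a t : ℝ} (ha : 1 ≤ a) (hta : |t| * a < 3) :
    (a * Real.exp (-t) + Real.exp (t * a)) / (a + 1) ≤
      Real.exp (a * (t ^ 2 / 2 / (1 - |t| * a / 3))) := by
  have hden : 0 < 1 - |t| * a / 3 := by linarith
  have ht : |t| ≤ |t| * a := le_mul_of_one_le_right (abs_nonneg t) ha
  have hneg : Real.exp (-t) ≤ 1 + -t + t ^ 2 / 2 / (1 - |t| * a / 3) := by
    refine (exp_le_one_add_self_add_bernstein (by rw [abs_neg]; linarith)).trans ?_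
    rw [abs_neg, neg_sq]
    gcongr
  have hpos : Real.exp (t * a) ≤ 1 + t * a + (t * a) ^ 2 / 2 / (1 - |t| * a / 3) := by
    have habs : |t * a| = |t| * a := by rw [abs_mul, abs_of_pos (a := a) (by linarith)]
    simpa only [habs] using exp_le_one_add_self_add_bernstein (habs.trans_lt hta)
  calc (a * Real.exp (-t) + Real.exp (t * a)) / (a + 1)
      ≤ (a * (1 + -t + t ^ 2 / 2 / (1 - |t| * a / 3)) +
          (1 + t * a + (t * a) ^ 2 / 2 / (1 - |t| * a / 3))) / (a + 1) := by gcongr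
    _ = a * (t ^ 2 / 2 / (1 - |t| * a / 3)) + 1 := by field_simp; ring
    _ ≤ _ := Real.add_one_le_exp _

theorem exists_bernstein_exponent_eq {a ε : ℝ} (ha : 0 < a) (hε : 0 ≤ ε) :
    ∃ t, 0 ≤ t ∧ t * a < 3 ∧
      a * (t ^ 2 / 2 / (1 - t * a / 3)) - t * ε = -ε ^ 2 / (2 * a * (1 + ε / 3)) := by
  refine ⟨ε / (a * (1 + ε / 3)), by positivity, ?_, ?_⟩
  · rw [div_mul_eq_mul_div, div_lt_iff₀ (by positivity)]
    nlinarith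
  · have hden : 1 - ε / (a * (1 + ε / 3)) * a / 3 = (1 + ε / 3)⁻¹ := by field_simp; ring
    rw [hden]
    field_simp
    ring

end Bernstein

section Product

open scoped ENNReal

variable {ι : Type*} {Ω : ι → Type*} [∀ i, MeasurableSpace (Ω i)] {μ : ∀ i, Measure (Ω i)}
  [∀ i, SigmaFinite (μ i)] {M : Type*} [AddCommMonoid M] [MeasurableSpace M] [MeasurableAdd₂ M]
  {S : AddSubmonoid M} {Φ : M → ℝ≥0∞} {Y : ∀ i, Ω i → M} {C : ℝ≥0∞}

theorem lmarginal_comp_sum_le [DecidableEq ι] (hΦ : Measurable Φ) (hY : ∀ i, Measurable (Y i))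
    (hYS : ∀ i ω, Y i ω ∈ S) (hstep : ∀ i, ∀ a ∈ S, ∫⁻ ω, Φ (a + Y i ω) ∂μ i ≤ C * Φ a)
    (s : Finset ι) (x : ∀ i, Ω i) :
    (∫⋯∫⁻_s, fun x => Φ (∑ i ∈ s, Y i (x i)) ∂μ) x ≤ C ^ s.card * Φ 0 := by
  have hmeas (s : Finset ι) : Measurable fun x : ∀ i, Ω i => Φ (∑ i ∈ s, Y i (x i)) := by fun_prop
  induction s using Finset.induction_on with
  | empty => simp
  | insert i s hi ih =>
    have hinner (x : ∀ i, Ω i) :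
        ∫⁻ ω, Φ (∑ j ∈ insert i s, Y j (Function.update x i ω j)) ∂μ i ≤
          C * Φ (∑ j ∈ s, Y j (x j)) := by
      have hsum (ω : Ω i) : ∑ j ∈ insert i s, Y j (Function.update x i ω j) =
          ∑ j ∈ s, Y j (x j) + Y i ω := by
        rw [Finset.sum_insert hi, Function.update_self, add_comm]
        refine congrArg (· + _) (Finset.sum_congr rfl fun j hj => ?_)
        rw [Function.update_of_ne (ne_of_mem_of_not_mem hj hi)]
      simp only [hsum]
      exact hstep i _ (sum_mem fun j _ => hYS j _)
    calc (∫⋯∫⁻_insert i s, fun x => Φ (∑ j ∈ insert i s, Y j (x j)) ∂μ) x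
        ≤ (∫⋯∫⁻_s, fun x => C * Φ (∑ j ∈ s, Y j (x j)) ∂μ) x := by
          rw [lmarginal_insert' _ (hmeas _) hi]
          exact lmarginal_mono hinner x
      _ = C * (∫⋯∫⁻_s, fun x => Φ (∑ j ∈ s, Y j (x j)) ∂μ) x :=
          lintegral_const_mul _ ((hmeas s).comp measurable_updateFinset)
      _ ≤ C ^ (insert i s).card * Φ 0 := by
          rw [Finset.card_insert_of_notMem hi, pow_succ', mul_assoc]
          gcongr

theorem lintegral_pi_comp_sum_le [Fintype ι] (hΦ : Measurable Φ) (hY : ∀ i, Measurable (Y i))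
    (hYS : ∀ i ω, Y i ω ∈ S) (hstep : ∀ i, ∀ a ∈ S, ∫⁻ ω, Φ (a + Y i ω) ∂μ i ≤ C * Φ a) :
    ∫⁻ x, Φ (∑ i, Y i (x i)) ∂Measure.pi μ ≤ C ^ Fintype.card ι * Φ 0 := by
  classical
  rcases isEmpty_or_nonempty (∀ i, Ω i) with hΩ | ⟨⟨x₀⟩⟩
  · simp [lintegral_of_isEmpty]
  · simpa using lmarginal_comp_sum_le hΦ hY hYS hstep Finset.univ x₀

end Product

section SecondMoment

open InnerProductSpace ContinuousLinearMap Module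
open scoped InnerProductSpace

variable {E : Type*} [NormedAddCommGroup E] [InnerProductSpace ℝ E] [MeasurableSpace E]

theorem integrable_inner_mul_inner {μ : Measure E} (hμ : MemLp id 2 μ) (u v : E) :
    Integrable (fun x => ⟪u, x⟫_ℝ * ⟪v, x⟫_ℝ) μ :=
  (hμ.const_inner u).integrable_mul (hμ.const_inner v)

theorem memLp_id_of_ae_norm_sq_le [BorelSpace E] [FiniteDimensional ℝ E]
    {μ : Measure E} [IsFiniteMeasure μ] {q : ℝ}
    (hμ : ∀ᵐ x ∂μ, ‖x‖ ^ 2 ≤ q) : MemLp id 2 μ :=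
  have := FiniteDimensional.proper_rclike ℝ E
  MemLp.of_bound aestronglyMeasurable_id (√q) (hμ.mono fun _ hx => Real.le_sqrt_of_sq_le hx)

theorem integrable_inner_apply_self [FiniteDimensional ℝ E] {μ : Measure E} (hμ : MemLp id 2 μ)
    (T : E →L[ℝ] E) : Integrable (fun x => ⟪x, T x⟫_ℝ) μ := by
  have := FiniteDimensional.complete ℝ E
  simp only [inner_apply_self_eq_sum (stdOrthonormalBasis ℝ E)]
  exact integrable_finsetSum _ fun i _ => integrable_inner_mul_inner hμ _ _

variable [CompleteSpace E] [BorelSpace E]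

theorem covarianceOperator_inner_self {μ : Measure E} (hμ : MemLp id 2 μ) (u : E) :
    ⟪u, covarianceOperator μ u⟫_ℝ = ∫ x, ⟪u, x⟫_ℝ ^ 2 ∂μ := by
  rw [real_inner_comm, covarianceOperator_inner hμ]
  simp only [sq]

theorem covarianceOperator_inner_self_eq_of_norm_eq {μ : Measure E} (hμ : MemLp id 2 μ)
    (hinv : ∀ e : E ≃ₗᵢ[ℝ] E, MeasurePreserving e μ μ) {u v : E} (huv : ‖u‖ = ‖v‖) :
    ⟪u, covarianceOperator μ u⟫_ℝ = ⟪v, covarianceOperator μ v⟫_ℝ := by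
  let e : E ≃ₗᵢ[ℝ] E := (ℝ ∙ (u - v))ᗮ.reflection
  have he (x : E) : ⟪v, e x⟫_ℝ = ⟪u, x⟫_ℝ := by
    rw [← Submodule.reflection_sub huv]
    exact e.inner_map_map u x
  simp only [covarianceOperator_inner_self hμ, ← he]
  exact (hinv e).integral_comp e.toHomeomorph.measurableEmbedding fun x => ⟪v, x⟫_ℝ ^ 2

variable [FiniteDimensional ℝ E]

theorem integral_inner_apply_self {μ : Measure E} (hμ : MemLp id 2 μ) {c : ℝ}
    (hcov : covarianceOperator μ = c • 1) (T : E →L[ℝ] E) :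
    ∫ x, ⟪x, T x⟫_ℝ ∂μ = c * operatorTrace T := by
  set b := stdOrthonormalBasis ℝ E
  rw [integral_congr_ae (.of_forall (inner_apply_self_eq_sum b T)),
    integral_finsetSum _ fun i _ => integrable_inner_mul_inner hμ _ _,
    operatorTrace_eq_sum_inner T b, Finset.mul_sum]
  refine Finset.sum_congr rfl fun i _ => ?_
  rw [← covarianceOperator_inner hμ, hcov]
  change ⟪c • b i, adjoint T (b i)⟫_ℝ = _
  rw [real_inner_smul_left, adjoint_inner_right, real_inner_comm]

theorem operatorTrace_covarianceOperator {μ : Measure E} (hμ : MemLp id 2 μ) :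
    operatorTrace (covarianceOperator μ) = ∫ x, ‖x‖ ^ 2 ∂μ := by
  set b := stdOrthonormalBasis ℝ E
  rw [operatorTrace_eq_sum_inner _ b]
  simp only [covarianceOperator_inner_self hμ, ← b.sum_sq_inner_right]
  exact (integral_finsetSum _ fun i _ => (hμ.const_inner (b i)).integrable_sq).symm

theorem covarianceOperator_eq_smul_one [Nontrivial E] {μ : Measure E}
    (hμ : MemLp id 2 μ) (hinv : ∀ e : E ≃ₗᵢ[ℝ] E, MeasurePreserving e μ μ) :
    covarianceOperator μ = ((∫ x, ‖x‖ ^ 2 ∂μ) / finrank ℝ E) • 1 := by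
  set b := stdOrthonormalBasis ℝ E
  set c : ℝ := (∫ x, ‖x‖ ^ 2 ∂μ) / finrank ℝ E with hc
  have hquad (u : E) : ⟪u, covarianceOperator μ u⟫_ℝ = c * ‖u‖ ^ 2 := by
    have hbasis (i) : ⟪u, covarianceOperator μ u⟫_ℝ =
        ‖u‖ ^ 2 * ⟪b i, covarianceOperator μ (b i)⟫_ℝ := by
      have hnorm : ‖u‖ = ‖‖u‖ • b i‖ := by rw [norm_smul, b.norm_eq_one, norm_norm, mul_one]
      rw [covarianceOperator_inner_self_eq_of_norm_eq hμ hinv hnorm, map_smul,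
        real_inner_smul_left, real_inner_smul_right]
      ring
    have hsum : finrank ℝ E * ⟪u, covarianceOperator μ u⟫_ℝ = ‖u‖ ^ 2 * ∫ x, ‖x‖ ^ 2 ∂μ := by
      rw [← operatorTrace_covarianceOperator hμ, operatorTrace_eq_sum_inner _ b, Finset.mul_sum,
        ← Finset.sum_congr rfl fun i _ => hbasis i, Finset.sum_const, Finset.card_univ,
        Fintype.card_fin, nsmul_eq_mul]
    have hdim : (finrank ℝ E : ℝ) ≠ 0 := Nat.cast_ne_zero.2 finrank_pos.ne'
    rw [hc, div_mul_eq_mul_div, eq_div_iff hdim, mul_comm, hsum, mul_comm]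
  have hsymm : (covarianceOperator μ - c • 1).toLinearMap.IsSymmetric :=
    isPositive_covarianceOperator.isSymmetric.sub (LinearMap.IsSymmetric.id.smul (conj_trivial c))
  rw [← sub_eq_zero]
  refine coe_injective (hsymm.inner_map_self_eq_zero.1 fun u => ?_)
  change ⟪covarianceOperator μ u - c • u, u⟫_ℝ = 0
  rw [inner_sub_left, real_inner_comm, hquad, real_inner_smul_left, real_inner_self_eq_norm_sq,
    sub_self]

end SecondMoment

section Ball

open Module Metric

variable {E : Type*} [NormedAddCommGroup E] [InnerProductSpace ℝ E] [FiniteDimensional ℝ E]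
  [MeasurableSpace E] [BorelSpace E]

theorem setIntegral_closedBall_norm_sq [Nontrivial E] {R : ℝ} (hR : 0 ≤ R) :
    ∫ x in closedBall (0 : E) R, ‖x‖ ^ 2 =
      finrank ℝ E / (finrank ℝ E + 2) * R ^ 2 *
        (volume : Measure E).real (closedBall 0 R) := by
  set d := finrank ℝ E
  have hradial : ∫ r in Set.Ioi (0 : ℝ), r ^ (d - 1) • (Set.Iic R).indicator (· ^ 2) r =
      R ^ (d + 2) / (d + 2) := by
    have hpow : d - 1 + 2 = d + 1 := by have := finrank_pos (R := ℝ) (M := E); omega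
    have h (r : ℝ) : r ^ (d - 1) • (Set.Iic R).indicator (· ^ 2) r =
        (Set.Iic R).indicator (· ^ (d + 1)) r := by
      simp only [Set.indicator, smul_eq_mul, mul_ite, ← pow_add, hpow, mul_zero]
    simp only [h]
    rw [setIntegral_indicator measurableSet_Iic, Set.Ioi_inter_Iic,
      ← intervalIntegral.integral_of_le hR, integral_pow]
    push_cast
    ring
  calc ∫ x in closedBall (0 : E) R, ‖x‖ ^ 2
      = ∫ x : E, (Set.Iic R).indicator (· ^ 2) ‖x‖ := by
        rw [← integral_indicator isClosed_closedBall.measurableSet]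
        congr with x
        simp [Set.indicator]
    _ = _ := by
        rw [integral_fun_norm_addHaar, hradial, Measure.addHaar_real_closedBall _ _ hR,
          nsmul_eq_mul, smul_eq_mul]
        ring

theorem measurePreserving_cond_closedBall (e : E ≃ₗᵢ[ℝ] E) (R : ℝ) :
    MeasurePreserving e (volume[|closedBall 0 R]) (volume[|closedBall 0 R]) := by
  have h := (e.measurePreserving.restrict_preimage
    (isClosed_closedBall (x := (0 : E)) (ε := R)).measurableSet).smul_measure
    (volume (closedBall (0 : E) R))⁻¹
  rwa [e.preimage_closedBall, map_zero] at h

theorem ae_norm_sq_le_cond_closedBall (R : ℝ) :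
    ∀ᵐ x ∂(volume : Measure E)[|closedBall 0 R], ‖x‖ ^ 2 ≤ R ^ 2 :=
  (ae_cond_mem isClosed_closedBall.measurableSet).mono fun _ hx =>
    pow_le_pow_left₀ (norm_nonneg _) (mem_closedBall_zero_iff.1 hx) 2

theorem isProbabilityMeasure_cond_closedBall {R : ℝ} (hR : 0 < R) :
    IsProbabilityMeasure ((volume : Measure E)[|closedBall 0 R]) :=
  cond_isProbabilityMeasure_of_finite (measure_closedBall_pos volume 0 hR).ne'
    measure_closedBall_lt_top.ne

theorem covarianceOperator_cond_closedBall [Nontrivial E] [CompleteSpace E] {R : ℝ} (hR : 0 < R) :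
    covarianceOperator ((volume : Measure E)[|closedBall 0 R]) =
      (R ^ 2 / (finrank ℝ E + 2)) • 1 := by
  have := isProbabilityMeasure_cond_closedBall (E := E) hR
  have hvol : (volume : Measure E).real (closedBall 0 R) ≠ 0 :=
    (measureReal_ne_zero_iff measure_closedBall_lt_top.ne).2
      (measure_closedBall_pos volume 0 hR).ne'
  rw [covarianceOperator_eq_smul_one (memLp_id_of_ae_norm_sq_le (ae_norm_sq_le_cond_closedBall R))
      fun e => measurePreserving_cond_closedBall e R, ProbabilityTheory.cond,
    integral_smul_measure, setIntegral_closedBall_norm_sq hR.le, ENNReal.toReal_inv,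
    ← measureReal_def, smul_eq_mul]
  congr 1
  have := (Nat.cast_pos (α := ℝ)).2 (finrank_pos (R := ℝ) (M := E))
  field_simp

end Ball

section Tail

open InnerProductSpace ContinuousLinearMap Module
open scoped InnerProductSpace ENNReal

variable {E : Type*} [NormedAddCommGroup E] [InnerProductSpace ℝ E] [FiniteDimensional ℝ E]

theorem measurable_operatorTrace_exp_smul_sub_one (t : ℝ) :
    Measurable fun T : E →L[ℝ] E => ENNReal.ofReal (operatorTrace (exp (t • (T - 1)))) :=
  have hcont : Continuous fun T : E →L[ℝ] E => t • (T - 1) := by fun_prop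
  (ENNReal.continuous_ofReal.comp (continuous_operatorTrace_exp.comp hcont)).measurable

variable [MeasurableSpace E] [BorelSpace E]

theorem measurable_sum_rankOne_self {ι : Type*} [Fintype ι] :
    Measurable fun x : ι → E => ∑ i, rankOne ℝ (x i) (x i) :=
  have := FiniteDimensional.proper_rclike ℝ E
  have := FiniteDimensional.proper_rclike ℝ (E →L[ℝ] E)
  Finset.measurable_sum _ fun i _ =>
    continuous_rankOne_self.measurable.comp (measurable_pi_apply i)

variable [CompleteSpace E]

theorem lintegral_operatorTrace_exp_add_smul_rankOne_le {μ : Measure E}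
    [IsProbabilityMeasure μ] {q c : ℝ} (hq : 0 < q) (hμ : ∀ᵐ x ∂μ, ‖x‖ ^ 2 ≤ q)
    (hcov : covarianceOperator μ = c • 1) {A : E →L[ℝ] E} (hA : IsSelfAdjoint A) (t : ℝ) :
    ∫⁻ x, .ofReal (operatorTrace (exp (A + t • rankOne ℝ x x))) ∂μ ≤
      .ofReal (1 + (Real.exp (t * q) - 1) / q * c) * .ofReal (operatorTrace (exp A)) := by
  have hLp := memLp_id_of_ae_norm_sq_le hμ
  set g : ℝ := (Real.exp (t * q) - 1) / q
  have hle : ∀ᵐ x ∂μ, operatorTrace (exp (A + t • rankOne ℝ x x)) ≤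
      operatorTrace (exp A) + g * ⟪x, exp A x⟫_ℝ :=
    hμ.mono fun x hx => operatorTrace_exp_add_smul_rankOne_le hA hq hx t
  have hnonneg : ∀ᵐ x ∂μ, 0 ≤ operatorTrace (exp A) + g * ⟪x, exp A x⟫_ℝ :=
    hle.mono fun x hx =>
      (operatorTrace_exp_nonneg (hA.add (isSelfAdjoint_smul_rankOne_self t x))).trans hx
  have hint := (integrable_inner_apply_self hLp (exp A)).const_mul g
  calc ∫⁻ x, .ofReal (operatorTrace (exp (A + t • rankOne ℝ x x))) ∂μ
      ≤ ∫⁻ x, .ofReal (operatorTrace (exp A) + g * ⟪x, exp A x⟫_ℝ) ∂μ :=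
        lintegral_mono_ae (hle.mono fun x hx => ENNReal.ofReal_le_ofReal hx)
    _ = .ofReal (∫ x, operatorTrace (exp A) + g * ⟪x, exp A x⟫_ℝ ∂μ) :=
        (ofReal_integral_eq_lintegral_ofReal ((integrable_const _).add hint) hnonneg).symm
    _ = .ofReal ((1 + g * c) * operatorTrace (exp A)) := by
        rw [integral_add (integrable_const _) hint, integral_const_mul,
          integral_inner_apply_self hLp hcov, integral_const, probReal_univ, one_smul]
        congr 1; ring
    _ = _ := ENNReal.ofReal_mul' (operatorTrace_exp_nonneg hA)

variable {ι : Type*} [Fintype ι] {μ : ι → Measure E} [∀ i, IsProbabilityMeasure (μ i)]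

theorem lintegral_pi_operatorTrace_exp_le {q c : ℝ} (hq : 0 < q)
    (hbdd : ∀ i, ∀ᵐ x ∂μ i, ‖x‖ ^ 2 ≤ q) (hcov : ∀ i, covarianceOperator (μ i) = c • 1) (t : ℝ) :
    ∫⁻ x, .ofReal (operatorTrace (exp (t • (∑ i, rankOne ℝ (x i) (x i) - 1)))) ∂Measure.pi μ ≤
      .ofReal (1 + (Real.exp (t * q) - 1) / q * c) ^ Fintype.card ι *
        .ofReal (finrank ℝ E * Real.exp (-t)) := by
  have := FiniteDimensional.proper_rclike ℝ E
  have := FiniteDimensional.proper_rclike ℝ (E →L[ℝ] E)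
  let Φ : (E →L[ℝ] E) → ℝ≥0∞ := fun T => .ofReal (operatorTrace (exp (t • (T - 1))))
  have hΦ0 : Φ 0 = .ofReal (finrank ℝ E * Real.exp (-t)) := by
    simp only [Φ]
    rw [zero_sub, smul_neg, ← neg_smul, operatorTrace_exp_smul_one]
  rw [← hΦ0]
  refine lintegral_pi_comp_sum_le (S := (selfAdjoint (E →L[ℝ] E)).toAddSubmonoid)
    (Φ := Φ) (Y := fun _ x => rankOne ℝ x x) (measurable_operatorTrace_exp_smul_sub_one t)
    (fun _ => continuous_rankOne_self.measurable)
    (fun _ x => isSelfAdjoint_iff'.2 (adjoint_rankOne x x)) fun i A hA => ?_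
  have hsa : IsSelfAdjoint (t • (A - 1)) :=
    IsSelfAdjoint.smul (.all _) (IsSelfAdjoint.sub hA (.one _))
  have hsplit (x : E) : t • (A + rankOne ℝ x x - 1) = t • (A - 1) + t • rankOne ℝ x x := by
    rw [add_sub_right_comm, smul_add]
  simp only [Φ, hsplit]
  exact lintegral_operatorTrace_exp_add_smul_rankOne_le hq (hbdd i) (hcov i) hsa t

theorem lintegral_pi_operatorTrace_exp_le_bernstein [Nonempty ι] {a : ℝ}
    (ha : 1 ≤ a) (hbdd : ∀ i, ∀ᵐ x ∂μ i, ‖x‖ ^ 2 ≤ (a + 1) / Fintype.card ι)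
    (hcov : ∀ i, covarianceOperator (μ i) = (Fintype.card ι : ℝ)⁻¹ • 1) {t : ℝ}
    (ht : |t| * a < 3) :
    ∫⁻ x, .ofReal (operatorTrace (exp ((Fintype.card ι * t) •
        (∑ i, rankOne ℝ (x i) (x i) - 1)))) ∂Measure.pi μ ≤
      .ofReal (finrank ℝ E *
        Real.exp (Fintype.card ι * (a * (t ^ 2 / 2 / (1 - |t| * a / 3))))) := by
  set n : ℝ := (Fintype.card ι : ℝ) with hn
  have hn0 : 0 < n := Nat.cast_pos.2 Fintype.card_pos
  set g : ℝ := 1 + (Real.exp (n * t * ((a + 1) / n)) - 1) / ((a + 1) / n) * n⁻¹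
  have hgrowth : g * Real.exp (-t) = (a * Real.exp (-t) + Real.exp (t * a)) / (a + 1) := by
    have hexp : Real.exp (t * (a + 1)) * Real.exp (-t) = Real.exp (t * a) := by
      rw [← Real.exp_add]; congr 1; ring
    simp only [g]
    rw [show n * t * ((a + 1) / n) = t * (a + 1) by field_simp, ← hexp]
    field_simp
    ring
  have hg : 0 ≤ g := by
    refine nonneg_of_mul_nonneg_left ?_ (Real.exp_pos (-t))
    rw [hgrowth]; positivity
  refine (lintegral_pi_operatorTrace_exp_le (by positivity) hbdd hcov (n * t)).trans ?_
  rw [← ENNReal.ofReal_pow hg, ← ENNReal.ofReal_mul (pow_nonneg hg _)]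
  refine ENNReal.ofReal_le_ofReal ?_
  calc g ^ Fintype.card ι * (finrank ℝ E * Real.exp (-(n * t)))
      = finrank ℝ E * (g * Real.exp (-t)) ^ Fintype.card ι := by
        rw [mul_pow, ← Real.exp_nat_mul, ← hn, mul_neg]; ring
    _ ≤ finrank ℝ E * Real.exp (a * (t ^ 2 / 2 / (1 - |t| * a / 3))) ^ Fintype.card ι := by
        rw [hgrowth]
        gcongr
        exact two_point_mgf_le ha ht
    _ = _ := by rw [← Real.exp_nat_mul]

theorem lintegral_pi_exp_norm_le_bernstein [Nontrivial E] [Nonempty ι] {a : ℝ}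
    (ha : 1 ≤ a) (hbdd : ∀ i, ∀ᵐ x ∂μ i, ‖x‖ ^ 2 ≤ (a + 1) / Fintype.card ι)
    (hcov : ∀ i, covarianceOperator (μ i) = (Fintype.card ι : ℝ)⁻¹ • 1) {t : ℝ}
    (ht0 : 0 ≤ t) (ht : t * a < 3) :
    ∫⁻ x, .ofReal (Real.exp (Fintype.card ι * t *
        ‖∑ i, rankOne ℝ (x i) (x i) - 1‖)) ∂Measure.pi μ ≤
      .ofReal (2 * finrank ℝ E *
        Real.exp (Fintype.card ι * (a * (t ^ 2 / 2 / (1 - t * a / 3))))) := by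
  set n : ℝ := (Fintype.card ι : ℝ)
  let D : (ι → E) → E →L[ℝ] E := fun x => ∑ i, rankOne ℝ (x i) (x i) - 1
  let τ : ℝ → (ι → E) → ℝ≥0∞ := fun s x => .ofReal (operatorTrace (exp ((n * s) • D x)))
  have hD (x : ι → E) : IsSelfAdjoint (D x) :=
    .sub (isSelfAdjoint_sum _ fun i _ => isSelfAdjoint_iff'.2 (adjoint_rankOne (x i) (x i)))
      (.one _)
  have hτ (s : ℝ) : Measurable (τ s) :=
    (measurable_operatorTrace_exp_smul_sub_one (n * s)).comp
      measurable_sum_rankOne_self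
  have hτ_le {s : ℝ} (hs : |s| = t) : ∫⁻ x, τ s x ∂Measure.pi μ ≤
      .ofReal (finrank ℝ E * Real.exp (n * (a * (t ^ 2 / 2 / (1 - t * a / 3))))) := by
    have h := lintegral_pi_operatorTrace_exp_le_bernstein ha hbdd hcov (hs.symm ▸ ht)
    rwa [← sq_abs s, hs] at h
  calc ∫⁻ x, .ofReal (Real.exp (n * t * ‖D x‖)) ∂Measure.pi μ
      ≤ ∫⁻ x, τ t x + τ (-t) x ∂Measure.pi μ := lintegral_mono fun x => by
        refine (ENNReal.ofReal_le_ofReal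
          (exp_mul_norm_le_operatorTrace_exp_add (hD x) (n * t))).trans ?_
        rw [← mul_neg]
        exact ENNReal.ofReal_add_le
    _ = ∫⁻ x, τ t x ∂Measure.pi μ + ∫⁻ x, τ (-t) x ∂Measure.pi μ := lintegral_add_left (hτ t) _
    _ ≤ _ := add_le_add (hτ_le (abs_of_nonneg ht0)) (hτ_le (by rw [abs_neg, abs_of_nonneg ht0]))
    _ = _ := by rw [← ENNReal.ofReal_add (by positivity) (by positivity)]; congr 1; ring

theorem measure_pi_le_norm_sum_rankOne_sub_one_le [Nontrivial E] [Nonempty ι] {a : ℝ} (ha : 1 ≤ a)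
    (hbdd : ∀ i, ∀ᵐ x ∂μ i, ‖x‖ ^ 2 ≤ (a + 1) / Fintype.card ι)
    (hcov : ∀ i, covarianceOperator (μ i) = (Fintype.card ι : ℝ)⁻¹ • 1) {ε : ℝ} (hε : 0 ≤ ε) :
    Measure.pi μ {x | ε ≤ ‖∑ i, rankOne ℝ (x i) (x i) - 1‖} ≤
      .ofReal (2 * finrank ℝ E *
        Real.exp (-(Fintype.card ι * ε ^ 2) / (2 * a * (1 + ε / 3)))) := by
  obtain ⟨t, ht0, hta, hexponent⟩ := exists_bernstein_exponent_eq (by linarith : 0 < a) hε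
  set n : ℝ := (Fintype.card ι : ℝ)
  set B : ℝ := a * (t ^ 2 / 2 / (1 - t * a / 3))
  let D : (ι → E) → E →L[ℝ] E := fun x => ∑ i, rankOne ℝ (x i) (x i) - 1
  let f : (ι → E) → ℝ≥0∞ := fun x => .ofReal (Real.exp (n * t * ‖D x‖))
  have hf : Measurable f := by
    have := FiniteDimensional.proper_rclike ℝ (E →L[ℝ] E)
    exact (((measurable_sum_rankOne_self.sub_const 1).norm.const_mul _).exp).ennreal_ofReal
  have hsub : {x | ε ≤ ‖D x‖} ⊆ {x | .ofReal (Real.exp (n * t * ε)) ≤ f x} := fun x hx =>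
    ENNReal.ofReal_le_ofReal (Real.exp_le_exp.2 (mul_le_mul_of_nonneg_left hx (by positivity)))
  calc Measure.pi μ {x | ε ≤ ‖D x‖}
      ≤ Measure.pi μ {x | .ofReal (Real.exp (n * t * ε)) ≤ f x} := measure_mono hsub
    _ ≤ (∫⁻ x, f x ∂Measure.pi μ) / .ofReal (Real.exp (n * t * ε)) :=
        meas_ge_le_lintegral_div hf.aemeasurable
          (ENNReal.ofReal_pos.2 (Real.exp_pos _)).ne' ENNReal.ofReal_ne_top
    _ ≤ .ofReal (2 * finrank ℝ E * Real.exp (n * B)) / .ofReal (Real.exp (n * t * ε)) :=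
        ENNReal.div_le_div_right (lintegral_pi_exp_norm_le_bernstein ha hbdd hcov ht0 hta) _
    _ = .ofReal (2 * finrank ℝ E * Real.exp (n * (B - t * ε))) := by
        rw [← ENNReal.ofReal_div_of_pos (Real.exp_pos _), mul_div_assoc, ← Real.exp_sub]
        congr 3; ring
    _ = _ := by rw [hexponent]; congr 3; ring

omit [CompleteSpace E] in
theorem ball_concentration_opNorm_general [Nontrivial E] [Nonempty ι] {ε : ℝ} (hε : 0 ≤ ε) :
    (Measure.pi fun _ : ι => (volume : Measure E)[|
        Metric.closedBall 0 √((finrank ℝ E + 2) / Fintype.card ι)])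
        {x | ε ≤ ‖∑ i, rankOne ℝ (x i) (x i) - 1‖} ≤
      .ofReal (2 * finrank ℝ E * Real.exp (-(Fintype.card ι * ε ^ 2) /
        (2 * finrank ℝ E + 2 + 2 * ε * (finrank ℝ E + 1) / 3))) := by
  have := FiniteDimensional.complete ℝ E
  have hR : 0 < √((finrank ℝ E + 2) / Fintype.card ι : ℝ) := by positivity
  have := isProbabilityMeasure_cond_closedBall (E := E) hR
  have hbdd := ae_norm_sq_le_cond_closedBall (E := E) √((finrank ℝ E + 2) / Fintype.card ι)
  have hcov := covarianceOperator_cond_closedBall (E := E) hR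
  rw [Real.sq_sqrt (by positivity)] at hbdd hcov
  rw [div_div_cancel_left' (by positivity)] at hcov
  have htail := measure_pi_le_norm_sum_rankOne_sub_one_le (ι := ι) (a := finrank ℝ E + 1) (by simp)
    (fun _ => by rwa [add_assoc, one_add_one_eq_two]) (fun _ => hcov) hε
  have hden : 2 * finrank ℝ E + 2 + 2 * ε * (finrank ℝ E + 1) / 3 =
      2 * (finrank ℝ E + 1) * (1 + ε / 3) := by ring
  rwa [hden]

end Tail

theorem frameOperator_eq_sum_rankOne {d n : ℕ} (x : Fin n → EuclideanSpace ℝ (Fin d)) :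
    frameOperator x = ∑ i, InnerProductSpace.rankOne ℝ (x i) (x i) :=
  rfl

/-- **Concentration in the ball, operator norm.**
If `x₁, …, xₙ` are i.i.d. uniform on the closed Euclidean ball of radius `√((d+2)/n)` in
`ℝ^d` (the uniform measure being the normalized restriction of Lebesgue measure to the
ball, i.e. `volume[|closedBall 0 R]`), then for every `ε ≥ 0`,
`ℙ(‖S - I‖_op ≥ ε) ≤ 2d · exp(-nε² / (2d + 2 + 2ε(d+1)/3))`. -/
theorem ball_concentration_opNorm
    (d n : ℕ) (hd : 2 ≤ d) (hn : 0 < n)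
    (ε : ℝ) (hε : 0 ≤ ε) :
    (Measure.pi fun _ : Fin n =>
        (volume : Measure (EuclideanSpace ℝ (Fin d)))[|
          Metric.closedBall (0 : EuclideanSpace ℝ (Fin d))
            (Real.sqrt ((d + 2) / n))])
        {x | ε ≤ ‖frameOperator x - 1‖}
      ≤ ENNReal.ofReal
          (2 * d * Real.exp (-(n * ε ^ 2) / (2 * d + 2 + 2 * ε * (d + 1) / 3))) := by
  have : NeZero d := ⟨by omega⟩
  have : NeZero n := ⟨hn.ne'⟩
  simpa only [frameOperator_eq_sum_rankOne, finrank_euclideanSpace_fin, Fintype.card_fin] using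
    ball_concentration_opNorm_general (ι := Fin n) (E := EuclideanSpace ℝ (Fin d)) hε
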